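/- Let 1 ≤ k < 2.5 and define the real sequence (a_i) by a₁ = (2k+7)/12 and a_{i+1} = k(a_i − 1)/2 + (2k+3)/8. Then: (i) (2k+1)/6 < a₁ < 1 and a₁ > 1/3; (ii) for every i with a_i ≥ 1/3 one has a_{i+1} + k(1 − a_i)/2 > (2k+1)/6 and a_i − a_{i+1} ≥ min(1/8, 1/24, (k+1)(2.5−k)/12) > 0; (iii) consequently there exists m ≥ 2 such that a₁ > a₂ > ⋯ > a_{m−1} ≥ 1/3 > a_m. -/

import Mathlib

/-!
One step of the recursion is `x ↦ T x = k (x - 1) / 2 + (2k + 3) / 8`, which is monotone, and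
`T a₁ ≤ a₁`, so the sequence never exceeds `a₁`. The decrement `x - T x` is affine in `x`; on
`[1/3, a₁]` it is therefore at least the smaller of its two endpoint values, `(2k - 1) / 24` at
`1/3` and `(k + 1) (5/2 - k) / 12` at `a₁`. Both are positive exactly for `1/2 < k < 5/2`, and a
sequence that drops by a fixed positive amount as long as it is `≥ 1/3` has to pass below `1/3`.
-/

lemma le_sub_nsmul_of_forall_succ_le_sub {α : Type*} [AddCommGroup α] [Preorder α]
    [AddLeftMono α] {u : ℕ → α} {δ : α} (h : ∀ n, u (n + 1) ≤ u n - δ) (n : ℕ) :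
    u n ≤ u 0 - n • δ := by
  induction n with
  | zero => simp
  | succ n ih =>
    calc u (n + 1) ≤ u n - δ := h n
      _ ≤ u 0 - n • δ - δ := sub_le_sub_right ih δ
      _ = u 0 - (n + 1) • δ := by rw [succ_nsmul, sub_sub]

section Decrement

variable {α : Type*} [AddCommGroup α] [LinearOrder α] [IsOrderedAddMonoid α] [Archimedean α]

lemma exists_lt_of_succ_le_sub {u : ℕ → α} {c δ : α} (hδ : 0 < δ)
    (h : ∀ n, c ≤ u n → u (n + 1) ≤ u n - δ) : ∃ n, u n < c := by
  by_contra! hc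
  obtain ⟨n, hn⟩ := exists_lt_nsmul hδ (u 0 - c)
  have hun : u n ≤ u 0 - n • δ := le_sub_nsmul_of_forall_succ_le_sub (fun i ↦ h i (hc i)) n
  exact (hun.trans_lt (sub_lt_comm.1 hn)).not_ge (hc n)

lemma exists_first_lt_of_succ_le_sub {u : ℕ → α} {c δ : α} (hδ : 0 < δ)
    (h : ∀ n, c ≤ u n → u (n + 1) ≤ u n - δ) : ∃ n, u n < c ∧ ∀ i < n, c ≤ u i := by
  classical
  have hex : ∃ n, u n < c := exists_lt_of_succ_le_sub hδ h
  exact ⟨Nat.find hex, Nat.find_spec hex, fun i hi ↦ not_lt.1 (Nat.find_min hex hi)⟩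

end Decrement

/-- The map `T` with `a (i + 1) = T (a i)` for the exponent sequence with parameter `k`. -/
noncomputable def exponentStep (k x : ℝ) : ℝ := k * (x - 1) / 2 + (2 * k + 3) / 8

/-- The first term `a₁` of the exponent sequence with parameter `k`. -/
noncomputable def exponentStart (k : ℝ) : ℝ := (2 * k + 7) / 12

lemma exponentStep_monotone {k : ℝ} (hk : 0 ≤ k) : Monotone (exponentStep k) := by
  intro x y hxy
  unfold exponentStep
  gcongr

lemma concaveOn_sub_exponentStep (k : ℝ) :
    ConcaveOn ℝ Set.univ (fun x ↦ x - exponentStep k x) := by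
  refine ⟨convex_univ, fun x _ y _ s t _ _ hst ↦ Eq.le ?_⟩
  simp only [exponentStep, smul_eq_mul]
  linear_combination (k / 2 - (2 * k + 3) / 8) * hst

lemma one_third_sub_exponentStep (k : ℝ) : 1 / 3 - exponentStep k (1 / 3) = (2 * k - 1) / 24 := by
  unfold exponentStep
  ring

lemma exponentStart_sub_exponentStep (k : ℝ) :
    exponentStart k - exponentStep k (exponentStart k) = (k + 1) * (5 / 2 - k) / 12 := by
  unfold exponentStart exponentStep
  ring

lemma min_le_sub_exponentStep {k x : ℝ} (hx : x ∈ Set.Icc (1 / 3) (exponentStart k)) :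
    min ((2 * k - 1) / 24) ((k + 1) * (5 / 2 - k) / 12) ≤ x - exponentStep k x := by
  rw [← one_third_sub_exponentStep, ← exponentStart_sub_exponentStep]
  exact (concaveOn_sub_exponentStep k).min_le_of_mem_Icc (Set.mem_univ _) (Set.mem_univ _) hx

lemma exponentStep_exponentStart_le {k : ℝ} (hk : -1 ≤ k) (hk' : k ≤ 5 / 2) :
    exponentStep k (exponentStart k) ≤ exponentStart k := by
  rw [← sub_nonneg, exponentStart_sub_exponentStep]
  exact div_nonneg (mul_nonneg (by linarith) (by linarith)) (by norm_num)

lemma le_exponentStart {k : ℝ} (hk : 0 ≤ k) (hk' : k ≤ 5 / 2) {u : ℕ → ℝ}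
    (h0 : u 0 ≤ exponentStart k) (hu : ∀ n, u (n + 1) = exponentStep k (u n)) (n : ℕ) :
    u n ≤ exponentStart k :=
  (exponentStep_monotone hk).seq_le_seq (y := fun _ ↦ exponentStart k) n h0
    (fun i _ ↦ (hu i).le) (fun _ _ ↦ exponentStep_exponentStart_le (by linarith) hk')

lemma min_le_sub_succ {k : ℝ} (hk : 0 ≤ k) (hk' : k ≤ 5 / 2) {u : ℕ → ℝ}
    (h0 : u 0 ≤ exponentStart k) (hu : ∀ n, u (n + 1) = exponentStep k (u n)) {n : ℕ}
    (hn : 1 / 3 ≤ u n) :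
    min ((2 * k - 1) / 24) ((k + 1) * (5 / 2 - k) / 12) ≤ u n - u (n + 1) :=
  hu n ▸ min_le_sub_exponentStep ⟨hn, le_exponentStart hk hk' h0 hu n⟩

lemma lt_exponentStep_add {k : ℝ} (hk : k < 5 / 2) (x : ℝ) :
    (2 * k + 1) / 6 < exponentStep k x + k * (1 - x) / 2 := by
  unfold exponentStep
  linarith

theorem exponent_sequence_properties_general
    (k : ℝ) (hk1 : 1 / 2 < k) (hk2 : k < 5 / 2) (a : ℕ → ℝ) (ha1 : a 1 = exponentStart k)
    (harec : ∀ i : ℕ, 1 ≤ i → a (i + 1) = exponentStep k (a i)) :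
    ((2 * k + 1) / 6 < a 1 ∧ a 1 < 1 ∧ 1 / 3 < a 1) ∧
    (∀ i : ℕ, 1 ≤ i → 1 / 3 ≤ a i →
      a (i + 1) + k * (1 - a i) / 2 > (2 * k + 1) / 6 ∧
      a i - a (i + 1) ≥ min ((2 * k - 1) / 24) ((k + 1) * (5 / 2 - k) / 12)) ∧
    (0 < min ((2 * k - 1) / 24) ((k + 1) * (5 / 2 - k) / 12)) ∧
    (∃ m : ℕ, 2 ≤ m ∧ (∀ i : ℕ, 1 ≤ i → i < m - 1 → a (i + 1) < a i) ∧
      1 / 3 ≤ a (m - 1) ∧ a m < 1 / 3) := by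
  have hstart : (2 * k + 1) / 6 < a 1 ∧ a 1 < 1 ∧ 1 / 3 < a 1 := by
    rw [ha1, exponentStart]
    refine ⟨?_, ?_, ?_⟩ <;> linarith
  have hpos : 0 < min ((2 * k - 1) / 24) ((k + 1) * (5 / 2 - k) / 12) :=
    lt_min (by linarith) (div_pos (mul_pos (by linarith) (by linarith)) (by norm_num))
  have hgap (n : ℕ) (hn : 1 / 3 ≤ a (n + 1)) :
      min ((2 * k - 1) / 24) ((k + 1) * (5 / 2 - k) / 12) ≤ a (n + 1) - a (n + 1 + 1) :=
    min_le_sub_succ (u := fun n ↦ a (n + 1)) (by linarith) hk2.le ha1.le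
      (fun n ↦ harec (n + 1) (by lia)) hn
  refine ⟨hstart, fun i hi hai ↦ ⟨?_, ?_⟩, hpos, ?_⟩
  · exact harec i hi ▸ lt_exponentStep_add hk2 (a i)
  · obtain ⟨n, rfl⟩ := Nat.exists_eq_add_of_le' hi
    exact hgap n hai
  · obtain ⟨n, hlt, hge⟩ := exists_first_lt_of_succ_le_sub (u := fun n ↦ a (n + 1)) hpos
      fun n hn ↦ le_sub_comm.1 (hgap n hn)
    obtain _ | n := n
    · exact absurd hlt hstart.2.2.not_gt
    refine ⟨n + 2, by lia, fun i hi hin ↦ ?_, hge n n.lt_succ_self, hlt⟩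
    obtain ⟨j, rfl⟩ := Nat.exists_eq_add_of_le' hi
    exact sub_pos.1 (hpos.trans_le (hgap j (hge j (by lia))))

/-- properties of the recursively defined exponent sequence
`a₁ = (2k+7)/12`, `a_{i+1} = k(a_i - 1)/2 + (2k+3)/8`, for `1 ≤ k < 2.5`. -/
theorem exponent_sequence_properties
    (k : ℝ) (hk1 : 1 ≤ k) (hk2 : k < 5/2)
    (a : ℕ → ℝ)
    (ha1 : a 1 = (2*k+7)/12)
    (harec : ∀ i : ℕ, 1 ≤ i → a (i+1) = k * (a i - 1) / 2 + (2*k+3)/8) :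
    -- (i)
    ((2*k+1)/6 < a 1 ∧ a 1 < 1 ∧ 1/3 < a 1) ∧
    -- (ii)
    (∀ i : ℕ, 1 ≤ i → 1/3 ≤ a i →
      a (i+1) + k * (1 - a i) / 2 > (2*k+1)/6 ∧
      a i - a (i+1) ≥ min (min (1/8) (1/24)) ((k+1) * (5/2 - k) / 12)) ∧
    (0 < min (min (1/8 : ℝ) (1/24)) ((k+1) * (5/2 - k) / 12)) ∧
    -- (iii)
    (∃ m : ℕ, 2 ≤ m ∧ (∀ i : ℕ, 1 ≤ i → i < m - 1 → a (i+1) < a i) ∧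
      1/3 ≤ a (m - 1) ∧ a m < 1/3) := by
  obtain ⟨hstart, hstep, hpos, hexit⟩ :=
    exponent_sequence_properties_general k (by linarith) hk2 a ha1 harec
  have hmin : min (min (1/8 : ℝ) (1/24)) ((k+1) * (5/2 - k) / 12) ≤
      min ((2*k-1)/24) ((k+1) * (5/2 - k) / 12) :=
    min_le_min_right _ ((min_le_right _ _).trans (by linarith))
  exact ⟨hstart, fun i hi hai ↦ (hstep i hi hai).imp_right hmin.trans,
    lt_min (by norm_num) (lt_min_iff.1 hpos).2, hexit⟩
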